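/- For all integers n ≥ 3 and k ≥ n, ||R_{k,n} − C_{k,n}|| ≥ 0.24·(n−1)/k + (n+1)·B_n/k^{n−1}. -/

import Mathlib

/-- Number of descents of a permutation of `{1,...,n}` (here `Fin n`, 0-indexed):
the number of positions `i` with `1 ≤ i ≤ n-1` and `π(i) > π(i+1)`. -/
def numDescents (n : ℕ) (π : Equiv.Perm (Fin n)) : ℕ :=
  ((Finset.range (n - 1)).filter (fun i =>
    ∃ h : i + 1 < n, π ⟨i + 1, h⟩ < π ⟨i, Nat.lt_of_succ_lt h⟩)).card

/-- `π` has a cyclic descent at `n` if `π(n) > π(1)`. -/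
def hasCyclicDescentAtLast (n : ℕ) (π : Equiv.Perm (Fin n)) : Prop :=
  ∃ h : 0 < n, π ⟨0, h⟩ < π ⟨n - 1, Nat.sub_lt h Nat.one_pos⟩

instance (n : ℕ) (π : Equiv.Perm (Fin n)) : Decidable (hasCyclicDescentAtLast n π) :=
  exists_prop_decidable _

/-- Number of cyclic descents: `d(π)+1` if `π` has a cyclic descent at `n`, else `d(π)`. -/
def numCyclicDescents (n : ℕ) (π : Equiv.Perm (Fin n)) : ℕ :=
  numDescents n π + if hasCyclicDescentAtLast n π then 1 else 0

/-- The k-riffle shuffle measure `R_{k,n}(π) = binom(n+k-d(π)-1, n) / k^n`. -/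
noncomputable def riffle (k n : ℕ) (π : Equiv.Perm (Fin n)) : ℝ :=
  (Nat.choose (n + k - numDescents n π - 1) n : ℝ) / (k : ℝ) ^ n

/-- The cut-then-k-riffle-shuffle measure
`C_{k,n}(π) = binom(n+k-cd(π)-1, n-1) / (n·k^(n-1))`. -/
noncomputable def cutRiffle (k n : ℕ) (π : Equiv.Perm (Fin n)) : ℝ :=
  (Nat.choose (n + k - numCyclicDescents n π - 1) (n - 1) : ℝ) / ((n : ℝ) * (k : ℝ) ^ (n - 1))

/-!
Rotating the one-line notation of a permutation preserves its number of cyclic descents. Every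
permutation of `{1, …, n}` is, uniquely, a rotation of one that starts with its least value, and
the latter is given by a permutation `σ` of `n - 1` letters; all `n` rotations have `c = d(σ) + 1`
cyclic descents, and exactly `c` of them have a cyclic descent at `n`. On this class `C_{k,n} =
R_{k,n-1}(σ) / n`, while `R_{k,n} - C_{k,n}` is `(n - c) / k` or `-c / k` times `C_{k,n}`
according to whether there is a cyclic descent at `n`. The distance is therefore the expectation
of `(d + 1) (n - 1 - d) / (n k)` under `R_{k,n-1}`. By Worpitzky's identity and telescoping sums
of binomial coefficients this expectation is a combination of the power sums `∑_{j < k} j ^ n` and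
`∑_{j < k} j ^ (n - 1)`, and Faulhaber's formula expands the distance as `(3 n - 1) / (12 k)`,
plus terms involving `B_i` for `3 ≤ i < n`, plus `(n + 1) B_n / k ^ (n - 1)`. For `k ≥ n` the
middle terms add up to at most `0.01 (n - 1) / k` in absolute value, since `|B_i| / i!` decays
like `(2 π) ^ (-i)`.
-/

section Descents

open Equiv Finset

theorem numDescents_succ (m : ℕ) (π : Perm (Fin (m + 1))) :
    numDescents (m + 1) π = #{i : Fin m | π i.succ < π i.castSucc} := by
  have descent_iff (i : Fin m) :
      (∃ h : (i : ℕ) + 1 < m + 1, π ⟨i + 1, h⟩ < π ⟨i, Nat.lt_of_succ_lt h⟩) ↔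
        π i.succ < π i.castSucc :=
    ⟨fun ⟨_, h⟩ => h, fun h => ⟨Nat.succ_lt_succ i.isLt, h⟩⟩
  rw [numDescents, card_filter, card_filter, Nat.add_sub_cancel, sum_range]
  simp only [descent_iff]

theorem numDescents_le (n : ℕ) (π : Perm (Fin n)) : numDescents n π ≤ n - 1 :=
  (card_filter_le _ _).trans_eq (card_range _)

theorem hasCyclicDescentAtLast_succ_iff (m : ℕ) (π : Perm (Fin (m + 1))) :
    hasCyclicDescentAtLast (m + 1) π ↔ π (Fin.last m + 1) < π (Fin.last m) := by
  rw [Fin.last_add_one]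
  exact ⟨fun ⟨_, h⟩ => h, fun h => ⟨Nat.succ_pos m, h⟩⟩

theorem numCyclicDescents_succ (m : ℕ) (π : Perm (Fin (m + 1))) :
    numCyclicDescents (m + 1) π = #{i : Fin (m + 1) | π (i + 1) < π i} := by
  rw [numCyclicDescents, numDescents_succ, card_filter, card_filter, Fin.sum_univ_castSucc]
  simp only [Fin.coeSucc_eq_succ, hasCyclicDescentAtLast_succ_iff]

theorem numCyclicDescents_succ_le (m : ℕ) (π : Perm (Fin (m + 1))) :
    numCyclicDescents (m + 1) π ≤ m + 1 := by
  rw [numCyclicDescents_succ]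
  exact (card_filter_le _ _).trans_eq (card_fin _)

theorem numCyclicDescents_mul_addRight (m : ℕ) (π : Perm (Fin (m + 1))) (r : Fin (m + 1)) :
    numCyclicDescents (m + 1) (π * Equiv.addRight r) = numCyclicDescents (m + 1) π := by
  rw [numCyclicDescents_succ, numCyclicDescents_succ]
  refine card_equiv (Equiv.addRight r) fun i => ?_
  simp only [mem_filter_univ, Perm.mul_apply, Equiv.coe_addRight, add_right_comm]

theorem card_hasCyclicDescentAtLast_mul_addRight (m : ℕ) (π : Perm (Fin (m + 1))) :
    #{r : Fin (m + 1) | hasCyclicDescentAtLast (m + 1) (π * Equiv.addRight r)} =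
      numCyclicDescents (m + 1) π := by
  rw [numCyclicDescents_succ]
  refine card_equiv (Equiv.addLeft (Fin.last m)) fun r => ?_
  simp only [mem_filter_univ, hasCyclicDescentAtLast_succ_iff, Perm.mul_apply,
    Equiv.coe_addRight, Equiv.coe_addLeft, add_right_comm]

theorem sum_rotations_ite_hasCyclicDescentAtLast {M : Type*} [AddCommMonoid M] (m : ℕ)
    (π : Perm (Fin (m + 1))) (a b : M) :
    ∑ r : Fin (m + 1), (if hasCyclicDescentAtLast (m + 1) (π * Equiv.addRight r) then a else b) =
      numCyclicDescents (m + 1) π • a + (m + 1 - numCyclicDescents (m + 1) π) • b := by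
  rw [sum_ite, sum_const, sum_const, filter_not, card_sdiff_of_subset (filter_subset _ _),
    card_fin, card_hasCyclicDescentAtLast_mul_addRight]

/-- The permutation of `Fin (m + 1)` obtained from `σ` by putting a new least value in front:
in one-line notation, `0, σ(0) + 1, …, σ(m - 1) + 1`. -/
def prependMin {m : ℕ} (σ : Perm (Fin m)) : Perm (Fin (m + 1)) :=
  Perm.decomposeFin.symm (0, σ)

@[simp]
theorem prependMin_zero {m : ℕ} (σ : Perm (Fin m)) : prependMin σ 0 = 0 :=
  Perm.decomposeFin_symm_apply_zero 0 σ

@[simp]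
theorem prependMin_succ {m : ℕ} (σ : Perm (Fin m)) (i : Fin m) :
    prependMin σ i.succ = (σ i).succ := by
  simp [prependMin]

theorem prependMin_injective (m : ℕ) :
    Function.Injective (prependMin : Perm (Fin m) → Perm (Fin (m + 1))) := fun σ τ h => by
  simpa using Perm.decomposeFin.symm.injective h

theorem numCyclicDescents_prependMin (m : ℕ) (σ : Perm (Fin (m + 1))) :
    numCyclicDescents (m + 2) (prependMin σ) = numDescents (m + 1) σ + 1 := by
  have descent_at_last : hasCyclicDescentAtLast (m + 2) (prependMin σ) := by
    rw [hasCyclicDescentAtLast_succ_iff, Fin.last_add_one, prependMin_zero, ← Fin.succ_last,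
      prependMin_succ]
    exact Fin.succ_pos _
  rw [numCyclicDescents, if_pos descent_at_last, numDescents_succ, numDescents_succ,
    card_filter, card_filter, Fin.sum_univ_succ]
  simp only [Fin.castSucc_zero, prependMin_zero, Fin.not_lt_zero, if_false, zero_add,
    ← Fin.succ_castSucc, prependMin_succ, Fin.succ_lt_succ_iff]

theorem bijective_prependMin_mul_addRight (m : ℕ) :
    Function.Bijective fun x : Fin (m + 1) × Perm (Fin m) =>
      prependMin x.2 * Equiv.addRight x.1 := by
  rw [Fintype.bijective_iff_injective_and_card]
  refine ⟨?_, (Fintype.card_congr Perm.decomposeFin).symm⟩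
  rintro ⟨r, σ⟩ ⟨s, τ⟩ (h : prependMin σ * Equiv.addRight r = prependMin τ * Equiv.addRight s)
  -- The value `0` sits at position `-r` on the left and at position `-s` on the right.
  obtain rfl : r = s := by
    have hτ : prependMin τ (-r + s) = 0 := by
      simpa using (DFunLike.congr_fun h (-r)).symm
    rw [← prependMin_zero τ] at hτ
    exact neg_add_eq_zero.mp ((prependMin τ).injective hτ)
  rw [prependMin_injective m (mul_right_cancel h)]

theorem sum_perm_ite_hasCyclicDescentAtLast {M : Type*} [AddCommMonoid M] (m : ℕ) (f g : ℕ → M) :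
    ∑ π : Perm (Fin (m + 2)), (if hasCyclicDescentAtLast (m + 2) π
        then f (numCyclicDescents (m + 2) π) else g (numCyclicDescents (m + 2) π)) =
      ∑ σ : Perm (Fin (m + 1)), ((numDescents (m + 1) σ + 1) • f (numDescents (m + 1) σ + 1) +
        (m + 1 - numDescents (m + 1) σ) • g (numDescents (m + 1) σ + 1)) := by
  rw [← (bijective_prependMin_mul_addRight (m + 1)).sum_comp, Fintype.sum_prod_type_right]
  refine sum_congr rfl fun σ _ => ?_
  simp only [numCyclicDescents_mul_addRight]
  rw [sum_rotations_ite_hasCyclicDescentAtLast, numCyclicDescents_prependMin,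
    Nat.add_sub_add_right]

end Descents

section Worpitzky

open Equiv Finset

theorem cast_succ_mul_choose_succ {R : Type*} [CommRing R] (a r : ℕ) :
    ((r : R) + 1) * a.choose (r + 1) = (a - r) * a.choose r := by
  rcases le_or_gt r a with h | h
  · have := congrArg (Nat.cast : ℕ → R) (Nat.choose_succ_right_eq a r)
    push_cast [Nat.cast_sub h] at this
    linear_combination this
  · simp [Nat.choose_eq_zero_of_lt h, Nat.choose_eq_zero_of_lt (h.trans r.lt_succ_self)]

theorem succ_mul_choose_add_sub_mul_choose {a d k m : ℕ} (hd : d ≤ m) (ha : a + d = m + k) :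
    (d + 1) * (a + 1).choose (m + 2) + (m + 1 - d) * a.choose (m + 2) =
      a.choose (m + 1) * k := by
  have haℤ : (a : ℤ) + d = m + k := mod_cast ha
  have absorb := cast_succ_mul_choose_succ (R := ℤ) a (m + 1)
  rw [Nat.choose_succ_succ' a (m + 1)]
  zify [hd.trans m.le_succ]
  push_cast at absorb
  linear_combination absorb + (a.choose (m + 1) : ℤ) * haℤ

/-- **Worpitzky's identity**, over permutations instead of Eulerian numbers. -/
theorem sum_choose_numDescents (n k : ℕ) :
    ∑ π : Perm (Fin n), (n + k - numDescents n π - 1).choose n = k ^ n := by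
  induction n using Nat.twoStepInduction with
  | zero => simp
  | one => simp [numDescents]
  | more m _ ih =>
    have choose_eq_ite (π : Perm (Fin (m + 2))) :
        (m + 2 + k - numDescents (m + 2) π - 1).choose (m + 2) =
          if hasCyclicDescentAtLast (m + 2) π
          then (m + 2 + k - numCyclicDescents (m + 2) π).choose (m + 2)
          else (m + 2 + k - numCyclicDescents (m + 2) π - 1).choose (m + 2) := by
      rw [numCyclicDescents]
      split_ifs <;> simp only [add_zero, ← Nat.sub_sub]
    rw [sum_congr rfl fun π _ => choose_eq_ite π,
      sum_perm_ite_hasCyclicDescentAtLast m (fun c => (m + 2 + k - c).choose (m + 2))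
        (fun c => (m + 2 + k - c - 1).choose (m + 2)), pow_succ, ← ih, sum_mul]
    refine sum_congr rfl fun σ _ => ?_
    have hd : numDescents (m + 1) σ ≤ m := numDescents_le (m + 1) σ
    set d := numDescents (m + 1) σ
    obtain ⟨a, ha⟩ : ∃ a, a + d = m + k := ⟨m + k - d, by omega⟩
    rw [show m + 2 + k - (d + 1) = a + 1 by omega, show m + 1 + k - d - 1 = a by omega,
      Nat.add_sub_cancel]
    exact succ_mul_choose_add_sub_mul_choose hd ha

end Worpitzky

section TotalVariation

open Equiv Finset

theorem riffle_sub_cutRiffle {k : ℕ} (hk : 0 < k) (m : ℕ) (π : Perm (Fin (m + 1))) :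
    riffle k (m + 1) π - cutRiffle k (m + 1) π =
      ((if hasCyclicDescentAtLast (m + 1) π then (m : ℝ) + 1 else 0) -
        numCyclicDescents (m + 1) π) / k * cutRiffle k (m + 1) π := by
  have hk₀ : (k : ℝ) ≠ 0 := mod_cast hk.ne'
  have hc := numCyclicDescents_succ_le m π
  rw [riffle, cutRiffle, Nat.add_sub_cancel]
  set c := numCyclicDescents (m + 1) π with hcd
  obtain ⟨a, ha⟩ : ∃ a, a + c = m + k := ⟨m + k - c, by omega⟩
  have haℝ : (a : ℝ) + c = m + k := mod_cast ha
  have absorb := cast_succ_mul_choose_succ (R := ℝ) a m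
  rw [show m + 1 + k - c - 1 = a by omega]
  rw [numCyclicDescents] at hcd
  split_ifs at hcd ⊢
  · rw [show m + 1 + k - numDescents (m + 1) π - 1 = a + 1 by omega, Nat.choose_succ_succ' a m]
    push_cast
    field_simp
    linear_combination (k : ℝ) ^ (m + 1) * (absorb + (a.choose m : ℝ) * haℝ)
  · rw [show m + 1 + k - numDescents (m + 1) π - 1 = a by omega]
    push_cast
    field_simp
    linear_combination (k : ℝ) ^ (m + 1) * (absorb + (a.choose m : ℝ) * haℝ)

theorem abs_riffle_sub_cutRiffle {k : ℕ} (hk : 0 < k) (m : ℕ) (π : Perm (Fin (m + 1))) :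
    |riffle k (m + 1) π - cutRiffle k (m + 1) π| =
      (if hasCyclicDescentAtLast (m + 1) π then m + 1 - (numCyclicDescents (m + 1) π : ℝ)
        else numCyclicDescents (m + 1) π) / k * cutRiffle k (m + 1) π := by
  have hc : (numCyclicDescents (m + 1) π : ℝ) ≤ m + 1 :=
    mod_cast numCyclicDescents_succ_le m π
  have cutRiffle_nonneg : 0 ≤ cutRiffle k (m + 1) π := by unfold cutRiffle; positivity
  rw [riffle_sub_cutRiffle hk, abs_mul, abs_div, Nat.abs_cast, abs_of_nonneg cutRiffle_nonneg]
  split_ifs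
  · rw [abs_of_nonneg (sub_nonneg.mpr hc)]
  · rw [zero_sub, abs_neg, Nat.abs_cast]

/-- A rotation class on which there are `c` cyclic descents contributes
`c (n - c) + (n - c) c` to the sum of the absolute differences. -/
theorem totalVariation_riffle_cutRiffle_eq_sum_riffle {k : ℕ} (hk : 0 < k) (m : ℕ) :
    (1 / 2) * ∑ π : Perm (Fin (m + 2)), |riffle k (m + 2) π - cutRiffle k (m + 2) π| =
      (∑ σ : Perm (Fin (m + 1)), ((numDescents (m + 1) σ : ℝ) + 1) *
        (m + 1 - numDescents (m + 1) σ) * riffle k (m + 1) σ) / ((m + 2) * k) := by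
  let C (c : ℕ) : ℝ :=
    ((m + 2 + k - c - 1).choose (m + 1) : ℝ) / (((m + 2 : ℕ) : ℝ) * (k : ℝ) ^ (m + 1))
  have abs_eq_ite (π : Perm (Fin (m + 2))) :
      |riffle k (m + 2) π - cutRiffle k (m + 2) π| =
        if hasCyclicDescentAtLast (m + 2) π
        then (m + 2 - (numCyclicDescents (m + 2) π : ℝ)) / k * C (numCyclicDescents (m + 2) π)
        else numCyclicDescents (m + 2) π / k * C (numCyclicDescents (m + 2) π) := by
    rw [abs_riffle_sub_cutRiffle hk, show cutRiffle k (m + 1 + 1) π = C _ from rfl]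
    push_cast
    split_ifs <;> ring
  rw [sum_congr rfl fun π _ => abs_eq_ite π, sum_perm_ite_hasCyclicDescentAtLast m
    (fun c => (m + 2 - (c : ℝ)) / k * C c) (fun c => c / k * C c), mul_sum, sum_div]
  refine sum_congr rfl fun σ _ => ?_
  have hd : numDescents (m + 1) σ ≤ m := numDescents_le (m + 1) σ
  have hC : C (numDescents (m + 1) σ + 1) = riffle k (m + 1) σ / (m + 2) := by
    simp only [C, riffle]
    rw [show m + 2 + k - (numDescents (m + 1) σ + 1) - 1 =
      m + 1 + k - numDescents (m + 1) σ - 1 by omega]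
    push_cast
    field_simp
  simp only [nsmul_eq_mul, hC]
  push_cast [hd.trans m.le_succ]
  field_simp
  ring

end TotalVariation

section PowerSums

open Equiv Finset

theorem cast_succ_sub_mul_choose_succ {R : Type*} [CommRing R] (a r : ℕ) :
    ((a : R) + 1 - r) * (a + 1).choose r = (a + 1) * a.choose r := by
  rcases le_or_gt r (a + 1) with h | h
  · have := congrArg (Nat.cast : ℕ → R) (Nat.choose_mul_succ_eq a r)
    push_cast [Nat.cast_sub h] at this
    linear_combination -this
  · simp [Nat.choose_eq_zero_of_lt h, Nat.choose_eq_zero_of_lt (a.lt_succ_self.trans h)]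

theorem succ_mul_sum_range_choose {R : Type*} [CommRing R] {e r : ℕ} (he : e < r) (k : ℕ) :
    ((r : R) + 1) * ∑ j ∈ range k, ((j + e).choose r : R) = (k + e - r) * (k + e).choose r := by
  induction k with
  | zero => simp [Nat.choose_eq_zero_of_lt he]
  | succ k ih =>
    have step := cast_succ_sub_mul_choose_succ (R := R) (k + e) r
    rw [sum_range_succ, mul_add, ih, add_right_comm k 1 e]
    push_cast at step ⊢
    linear_combination -step

theorem succ_mul_add_two_mul_sum_range_mul_choose {R : Type*} [CommRing R] {e r : ℕ}
    (he : e < r) (k : ℕ) :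
    ((r : R) + 1) * (r + 2) * ∑ j ∈ range k, (j : R) * (j + e).choose r =
      (k + e - r) * ((r + 1) * k - e - 1) * (k + e).choose r := by
  induction k with
  | zero => simp [Nat.choose_eq_zero_of_lt he]
  | succ k ih =>
    have step := cast_succ_sub_mul_choose_succ (R := R) (k + e) r
    rw [sum_range_succ, mul_add, ih, add_right_comm k 1 e]
    push_cast at step ⊢
    linear_combination -((r + 1) * (k + 1) - e - 1 : R) * step

theorem sub_mul_succ_mul_choose {R : Type*} [CommRing R] {e r : ℕ} (he : e < r) (k : ℕ) :
    ((r : R) - e) * (e + 1) * (k + e).choose r =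
      k * (r + 1 - k) * (k + e).choose r +
        (r + 1) * (r + 2) * ∑ j ∈ range k, (j : R) * (j + e).choose r -
        r * (r + 1) * k * ∑ j ∈ range k, ((j + e).choose r : R) := by
  linear_combination (r * k : R) * succ_mul_sum_range_choose (R := R) he k -
    succ_mul_add_two_mul_sum_range_mul_choose (R := R) he k

theorem sum_numDescents_succ_mul_sub_mul_choose (m k : ℕ) :
    ∑ σ : Perm (Fin (m + 1)), ((numDescents (m + 1) σ : ℝ) + 1) *
        (m + 1 - numDescents (m + 1) σ) * (m + 1 + k - numDescents (m + 1) σ - 1).choose (m + 1) =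
      k * (m + 2 - k) * (k : ℝ) ^ (m + 1) +
        (m + 2) * (m + 3) * ∑ j ∈ range k, (j : ℝ) ^ (m + 2) -
        (m + 1) * (m + 2) * k * ∑ j ∈ range k, (j : ℝ) ^ (m + 1) := by
  have worpitzky (j : ℕ) : ∑ σ : Perm (Fin (m + 1)),
      ((m + 1 + j - numDescents (m + 1) σ - 1).choose (m + 1) : ℝ) = (j : ℝ) ^ (m + 1) :=
    mod_cast sum_choose_numDescents (m + 1) j
  have pointwise (σ : Perm (Fin (m + 1))) :
      ((numDescents (m + 1) σ : ℝ) + 1) * (m + 1 - numDescents (m + 1) σ) *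
          (m + 1 + k - numDescents (m + 1) σ - 1).choose (m + 1) =
        k * (m + 2 - k) * (m + 1 + k - numDescents (m + 1) σ - 1).choose (m + 1) +
          (m + 2) * (m + 3) * ∑ j ∈ range k,
            (j : ℝ) * (m + 1 + j - numDescents (m + 1) σ - 1).choose (m + 1) -
          (m + 1) * (m + 2) * k * ∑ j ∈ range k,
            ((m + 1 + j - numDescents (m + 1) σ - 1).choose (m + 1) : ℝ) := by
    have hd : numDescents (m + 1) σ ≤ m := numDescents_le (m + 1) σ
    set d := numDescents (m + 1) σ
    obtain ⟨e, he⟩ : ∃ e, d + e = m := ⟨m - d, by omega⟩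
    have heℝ : (d : ℝ) = m - e := by rw [← he]; push_cast; ring
    have reindex (j : ℕ) : m + 1 + j - d - 1 = j + e := by omega
    have h := sub_mul_succ_mul_choose (R := ℝ) (show e < m + 1 by omega) k
    simp only [reindex, heℝ]
    push_cast at h
    linear_combination h
  simp only [pointwise, sum_sub_distrib, sum_add_distrib, ← mul_sum]
  rw [sum_comm (t := range k), sum_comm (t := range k)]
  simp only [← mul_sum, worpitzky, ← pow_succ']

theorem totalVariation_riffle_cutRiffle_eq_sum_pow {k : ℕ} (hk : 0 < k) (m : ℕ) :
    (1 / 2) * ∑ π : Perm (Fin (m + 2)), |riffle k (m + 2) π - cutRiffle k (m + 2) π| =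
      1 - k / (m + 2) + (m + 3) * (∑ j ∈ range k, (j : ℝ) ^ (m + 2)) / k ^ (m + 2) -
        (m + 1) * (∑ j ∈ range k, (j : ℝ) ^ (m + 1)) / k ^ (m + 1) := by
  have hk₀ : (k : ℝ) ≠ 0 := mod_cast hk.ne'
  rw [totalVariation_riffle_cutRiffle_eq_sum_riffle hk]
  simp only [riffle, mul_div_assoc', ← sum_div]
  rw [sum_numDescents_succ_mul_sub_mul_choose]
  field_simp
  ring

end PowerSums

section Bernoulli

open Equiv Finset

theorem succ_mul_sum_range_pow_div_pow {k : ℕ} (hk : 0 < k) (p : ℕ) :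
    ((p : ℝ) + 1) * (∑ j ∈ range k, (j : ℝ) ^ p) / k ^ p =
      ∑ i ∈ range (p + 1), (bernoulli i : ℝ) * (p + 1).choose i * (k / k ^ i) := by
  have faulhaber := congrArg (Rat.cast : ℚ → ℝ) (sum_range_pow k p)
  push_cast at faulhaber
  rw [faulhaber, mul_sum, sum_div]
  refine sum_congr rfl fun i hi => ?_
  have split_pow : (k : ℝ) ^ (p + 1 - i) * k ^ i = k * k ^ p := by
    rw [← pow_add, Nat.sub_add_cancel (mem_range.mp hi).le, pow_succ']
  field_simp
  linear_combination (bernoulli i : ℝ) * ((p + 1).choose i : ℝ) * split_pow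

/-- The coefficient of `B_i / k ^ (i - 1)`, for `i < n`, in the expansion of the total variation
distance obtained from Faulhaber's formula. -/
noncomputable def bernoulliCoeff (n i : ℕ) : ℝ :=
  (n + 1).choose i - (n - 1) / n * n.choose i

theorem totalVariation_riffle_cutRiffle_eq_sum_range_bernoulli {k : ℕ} (hk : 0 < k) (m : ℕ) :
    (1 / 2) * ∑ π : Perm (Fin (m + 2)), |riffle k (m + 2) π - cutRiffle k (m + 2) π| =
      1 - k / (m + 2) +
        ∑ i ∈ range (m + 2), bernoulli i * bernoulliCoeff (m + 2) i * (k / k ^ i) +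
        (m + 3) * bernoulli (m + 2) / k ^ (m + 1) := by
  have pow_sum_succ := succ_mul_sum_range_pow_div_pow hk (m + 2)
  have pow_sum := succ_mul_sum_range_pow_div_pow hk (m + 1)
  have split_coeff :
      ∑ i ∈ range (m + 2), bernoulli i * bernoulliCoeff (m + 2) i * ((k : ℝ) / k ^ i) =
        ∑ i ∈ range (m + 2), (bernoulli i : ℝ) * (m + 2 + 1).choose i * (k / k ^ i) -
        (m + 1) / (m + 2) *
          ∑ i ∈ range (m + 2), (bernoulli i : ℝ) * (m + 1 + 1).choose i * (k / k ^ i) := by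
    rw [mul_sum, ← sum_sub_distrib]
    refine sum_congr rfl fun i _ => ?_
    rw [bernoulliCoeff]
    push_cast
    ring
  rw [sum_range_succ, Nat.choose_succ_self_right] at pow_sum_succ
  rw [totalVariation_riffle_cutRiffle_eq_sum_pow hk, split_coeff, ← pow_sum,
    ← sub_eq_iff_eq_add.mpr pow_sum_succ]
  push_cast
  field_simp
  ring

end Bernoulli

section Estimates

open Equiv Finset

theorem bernoulliCoeff_mul_factorial (m x : ℕ) :
    bernoulliCoeff (m + 1) (x + 2) * (x + 2).factorial =
      m.descFactorial x * (m + 2 + m * (x + 2)) := by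
  have choose_mul_factorial (a b : ℕ) : (a.choose b : ℝ) * b.factorial = a.descFactorial b := by
    rw [Nat.descFactorial_eq_factorial_mul_choose, Nat.cast_mul, mul_comm]
  have descFactorial_succ :
      (m.descFactorial (x + 1) : ℝ) = (m - x) * m.descFactorial x := by
    rcases le_or_gt x m with h | h
    · rw [Nat.descFactorial_succ, Nat.cast_mul, Nat.cast_sub h]
    · simp [Nat.descFactorial_of_lt h]
  rw [bernoulliCoeff, sub_mul, mul_assoc, choose_mul_factorial, choose_mul_factorial,
    Nat.succ_descFactorial_succ, Nat.succ_descFactorial_succ, Nat.succ_descFactorial_succ]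
  push_cast
  rw [descFactorial_succ]
  field_simp
  ring

theorem bernoulliCoeff_nonneg (m x : ℕ) : 0 ≤ bernoulliCoeff (m + 1) (x + 2) :=
  nonneg_of_mul_nonneg_left
    (by rw [bernoulliCoeff_mul_factorial]; positivity) (by positivity : 0 < ((x + 2).factorial : ℝ))

theorem bernoulliCoeff_le (m y : ℕ) :
    bernoulliCoeff (m + 1) (y + 3) ≤
      m * ((m : ℝ) + 1) ^ (y + 1) * ((y + 4) / (y + 3).factorial) := by
  have descFactorial_le : (m.descFactorial (y + 1) : ℝ) ≤ m * ((m : ℝ) + 1) ^ y := by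
    cases m with
    | zero => simp
    | succ m =>
      rw [Nat.succ_descFactorial_succ]
      have : m.descFactorial y ≤ (m + 1 + 1) ^ y :=
        (Nat.descFactorial_le_pow m y).trans (Nat.pow_le_pow_left (by omega) y)
      exact_mod_cast Nat.mul_le_mul_left (m + 1) this
  have factor_le : (m : ℝ) + 2 + m * ((y + 1 : ℕ) + 2) ≤ (m + 1) * (y + 4) := by
    push_cast
    linarith [(Nat.cast_nonneg y : (0 : ℝ) ≤ y)]
  rw [mul_div_assoc', le_div_iff₀ (by positivity), bernoulliCoeff_mul_factorial m (y + 1)]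
  calc (m.descFactorial (y + 1) : ℝ) * (m + 2 + m * ((y + 1 : ℕ) + 2))
      ≤ m * ((m : ℝ) + 1) ^ y * ((m + 1) * (y + 4)) := by gcongr
    _ = m * ((m : ℝ) + 1) ^ (y + 1) * (y + 4) := by ring

/-- From Euler's formula `|B_i| / i! = 2 ζ(i) / (2 π) ^ i` for even `i`, and `ζ(i) ≤ ζ(2)`. -/
theorem abs_bernoulli_div_factorial_le {i : ℕ} (hi : 2 ≤ i) :
    |(bernoulli i : ℝ)| / i.factorial ≤ Real.pi ^ 2 / 3 / (2 * Real.pi) ^ i := by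
  rcases Nat.even_or_odd' i with ⟨t, rfl | rfl⟩
  · have zeta := hasSum_zeta_nat (k := t) (by omega)
    have zeta_le := hasSum_le (fun n : ℕ => ?_) zeta hasSum_zeta_two
    · have zeta_nonneg := zeta.nonneg fun n => by positivity
      have abs_zeta :
          |(-1 : ℝ) ^ (t + 1) * 2 ^ (2 * t - 1) * Real.pi ^ (2 * t) * bernoulli (2 * t) /
            (2 * t).factorial| =
          (2 * Real.pi) ^ (2 * t) / 2 * (|(bernoulli (2 * t) : ℝ)| / (2 * t).factorial) := by
        have two_pow : (2 : ℝ) ^ (2 * t) = 2 * 2 ^ (2 * t - 1) :=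
          (mul_pow_sub_one (by omega) 2).symm
        rw [abs_div, abs_mul, abs_mul, abs_mul, abs_neg_one_pow, Nat.abs_cast,
          abs_of_pos (by positivity : (0 : ℝ) < 2 ^ (2 * t - 1)),
          abs_of_pos (by positivity : 0 < Real.pi ^ (2 * t)), mul_pow, two_pow]
        ring
      rw [abs_of_nonneg zeta_nonneg] at abs_zeta
      rw [abs_zeta] at zeta_le
      rw [le_div_iff₀ (by positivity)]
      linarith
    · rcases n.eq_zero_or_pos with rfl | hn
      · simp [show t ≠ 0 by omega]
      · have : (1 : ℝ) ≤ n := mod_cast hn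
        gcongr
  · rw [bernoulli_eq_zero_of_odd (odd_two_mul_add_one t) (by omega), Rat.cast_zero, abs_zero,
      zero_div]
    positivity

/-- The bound `(i + 1) |B_i| / i!`, up to the common factor `(n - 1) / k`, for the term of index
`i ≥ 3` in the expansion of the total variation distance. -/
noncomputable def bernoulliWeight (i : ℕ) : ℝ :=
  (i + 1) * (|(bernoulli i : ℝ)| / i.factorial)

theorem bernoulliWeight_nonneg (i : ℕ) : 0 ≤ bernoulliWeight i := by
  unfold bernoulliWeight
  positivity

theorem bernoulliWeight_add_five_le (x : ℕ) : bernoulliWeight (x + 5) ≤ 0.0024 / 5 ^ x := by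
  have linear_le : (x : ℝ) + 6 ≤ 6 * (5 / 4) ^ x := by
    have := one_add_mul_le_pow (a := (1 / 4 : ℝ)) (by norm_num) x
    rw [show (1 : ℝ) + 1 / 4 = 5 / 4 by norm_num] at this
    linarith [(Nat.cast_nonneg x : (0 : ℝ) ≤ x)]
  have pi_sq_le : Real.pi ^ 2 / 3 ≤ 3.31 := by nlinarith [Real.pi_gt_d2, Real.pi_lt_d2]
  have le_two_pi : (25 / 4 : ℝ) ≤ 2 * Real.pi := by linarith [Real.pi_gt_d2]
  calc bernoulliWeight (x + 5)
      = (x + 6) * (|(bernoulli (x + 5) : ℝ)| / (x + 5).factorial) := by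
        rw [bernoulliWeight]; push_cast; ring
    _ ≤ (x + 6) * (Real.pi ^ 2 / 3 / (2 * Real.pi) ^ (x + 5)) := by
        gcongr ?_ * ?_
        exact abs_bernoulli_div_factorial_le (by omega)
    _ ≤ 6 * (5 / 4) ^ x * (3.31 / (25 / 4) ^ (x + 5)) := by gcongr
    _ = 6 * 3.31 / (25 / 4) ^ 5 / 5 ^ x := by
        rw [show (25 / 4 : ℝ) = 5 / 4 * 5 by norm_num, pow_add, mul_pow _ _ x]
        field_simp
    _ ≤ 0.0024 / 5 ^ x := by gcongr; norm_num

theorem sum_Ico_bernoulliWeight_le (n : ℕ) : ∑ i ∈ Ico 3 n, bernoulliWeight i ≤ 0.01 := by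
  have geometric (q : ℕ) :
      ∑ i ∈ Ico 3 (q + 5), bernoulliWeight i ≤ 0.01 - 0.003 / 5 ^ q := by
    induction q with
    | zero =>
      rw [sum_Ico_succ_top (by norm_num), sum_Ico_succ_top (by norm_num), Ico_self, sum_empty,
        bernoulliWeight, bernoulliWeight, bernoulli_eq_zero_of_odd (by decide) (by norm_num),
        bernoulli_eq_bernoulli'_of_ne_one (by norm_num), bernoulli'_four]
      norm_num [Nat.factorial]
    | succ q ih =>
      rw [add_right_comm, sum_Ico_succ_top (by omega)]
      refine (add_le_add ih (bernoulliWeight_add_five_le q)).trans_eq ?_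
      rw [pow_succ]
      ring
  calc ∑ i ∈ Ico 3 n, bernoulliWeight i
      ≤ ∑ i ∈ Ico 3 (n + 5), bernoulliWeight i :=
        sum_le_sum_of_subset_of_nonneg (Ico_subset_Ico_right (by omega))
          fun i _ _ => bernoulliWeight_nonneg i
    _ ≤ 0.01 - 0.003 / 5 ^ n := geometric n
    _ ≤ 0.01 := sub_le_self _ (by positivity)

theorem abs_bernoulli_mul_bernoulliCoeff_le {m k i : ℕ} (hi : 3 ≤ i) (hk : m + 1 ≤ k) :
    |(bernoulli i : ℝ) * bernoulliCoeff (m + 1) i * (k / k ^ i)| ≤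
      bernoulliWeight i * (m / k) := by
  obtain ⟨y, rfl⟩ := Nat.exists_eq_add_of_le' hi
  have hk₀ : (0 : ℝ) < k := mod_cast m.succ_pos.trans_le hk
  have hkℝ : (m : ℝ) + 1 ≤ k := mod_cast hk
  rw [abs_mul, abs_mul, abs_of_nonneg (bernoulliCoeff_nonneg m (y + 1)),
    abs_of_nonneg (by positivity : (0 : ℝ) ≤ k / k ^ (y + 3))]
  calc |(bernoulli (y + 3) : ℝ)| * bernoulliCoeff (m + 1) (y + 3) * (k / k ^ (y + 3))
      ≤ |(bernoulli (y + 3) : ℝ)| *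
          (m * (k : ℝ) ^ (y + 1) * ((y + 4) / (y + 3).factorial)) * (k / k ^ (y + 3)) := by
        gcongr
        exact (bernoulliCoeff_le m y).trans (by gcongr)
    _ = bernoulliWeight (y + 3) * (m / k) := by
        rw [bernoulliWeight]
        push_cast
        field_simp
        ring

theorem abs_sum_Ico_bernoulli_mul_bernoulliCoeff_le {m k : ℕ} (hk : m + 1 ≤ k) (l : ℕ) :
    |∑ i ∈ Ico 3 l, (bernoulli i : ℝ) * bernoulliCoeff (m + 1) i * (k / k ^ i)| ≤
      0.01 * (m / k) :=
  calc _ ≤ ∑ i ∈ Ico 3 l, |(bernoulli i : ℝ) * bernoulliCoeff (m + 1) i * (k / k ^ i)| :=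
        abs_sum_le_sum_abs _ _
    _ ≤ ∑ i ∈ Ico 3 l, bernoulliWeight i * (m / k) :=
        sum_le_sum fun _ hi => abs_bernoulli_mul_bernoulliCoeff_le (mem_Ico.mp hi).1 hk
    _ ≤ 0.01 * (m / k) := by
        rw [← sum_mul]
        gcongr
        exact sum_Ico_bernoulliWeight_le l

/-- The terms of index `0` and `1` of the Faulhaber expansion cancel against `1 - k / n`. -/
theorem totalVariation_riffle_cutRiffle_eq {n k : ℕ} (hn : 3 ≤ n) (hk : 0 < k) :
    (1 / 2) * ∑ π : Perm (Fin n), |riffle k n π - cutRiffle k n π| =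
      (3 * n - 1) / (12 * k) +
        ∑ i ∈ Ico 3 n, bernoulli i * bernoulliCoeff n i * (k / k ^ i) +
        (n + 1) * bernoulli n / k ^ (n - 1) := by
  obtain ⟨m, rfl⟩ := Nat.exists_eq_add_of_le' (show 2 ≤ n by omega)
  have hk₀ : (k : ℝ) ≠ 0 := mod_cast hk.ne'
  have coeff_zero : bernoulliCoeff (m + 2) 0 = 1 / (m + 2) := by
    rw [bernoulliCoeff, Nat.choose_zero_right, Nat.choose_zero_right]
    push_cast
    field_simp
    ring
  have coeff_one : bernoulliCoeff (m + 2) 1 = 2 := by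
    rw [bernoulliCoeff, Nat.choose_one_right, Nat.choose_one_right]
    push_cast
    field_simp
    ring
  have coeff_two : bernoulliCoeff (m + 2) 2 * 2 = 3 * m + 5 := by
    have := bernoulliCoeff_mul_factorial (m + 1) 0
    rw [Nat.descFactorial_zero, zero_add, Nat.factorial_two] at this
    push_cast at this
    linarith
  rw [totalVariation_riffle_cutRiffle_eq_sum_range_bernoulli hk, ← sum_range_add_sum_Ico _ hn,
    sum_range_succ, sum_range_succ, sum_range_one, coeff_zero, coeff_one,
    eq_div_of_mul_eq two_ne_zero coeff_two, bernoulli_zero, bernoulli_one, bernoulli_two]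
  push_cast
  field_simp
  ring

end Estimates

/-- for `n ≥ 3` and `k ≥ n`,
`||R_{k,n} - C_{k,n}|| ≥ 0.24·(n-1)/k + (n+1)·B_n/k^(n-1)`. -/
theorem totalVariation_riffle_cutRiffle_ge (n k : ℕ) (hn : 3 ≤ n) (hk : n ≤ k) :
    (0.24 : ℝ) * ((n : ℝ) - 1) / (k : ℝ)
        + ((n : ℝ) + 1) * (bernoulli n : ℝ) / (k : ℝ) ^ (n - 1)
      ≤ (1 / 2) * ∑ π : Equiv.Perm (Fin n), |riffle k n π - cutRiffle k n π| := by
  have hk₀ : 0 < k := by omega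
  obtain ⟨m, rfl⟩ := Nat.exists_eq_add_of_le' (show 1 ≤ n by omega)
  have tail_ge := neg_le_of_abs_le (abs_sum_Ico_bernoulli_mul_bernoulliCoeff_le hk (m + 1))
  have constants : (0.24 : ℝ) * (((m + 1 : ℕ) : ℝ) - 1) / k ≤
      (3 * ((m + 1 : ℕ) : ℝ) - 1) / (12 * k) - 0.01 * (m / k) := by
    rw [← mul_div_assoc, ← div_div, ← sub_div]
    gcongr
    push_cast
    linarith
  rw [totalVariation_riffle_cutRiffle_eq hn hk₀]
  linarith
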